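/- arXiv:1908.10934 — 2 statements merged into one kernel-verified Lean document; each statement's English description precedes it below -/
import Mathlib

section
/- For a weak composition c = (c_1,...,c_n) of n−1 (nonnegative integers summing to n−1), let S_c = {k ∈ {1,...,n−1} : c_1 + ... + c_k < k}. Then the divided symmetrization of the monomial x^c = x_1^{c_1}···x_n^{c_n} satisfies ⟨x^c⟩_n = (−1)^{|S_c|}·β(S_c), where β(S) is the number of permutations w ∈ S_n whose descent set {i : w(i) > w(i+1)} equals S. -/
open MvPolynomial

/-- The denominator `∏_{i=1}^{n-1} (x_i - x_{i+1})` of divided symmetrization. -/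
noncomputable def denomDS (n : ℕ) : MvPolynomial (Fin n) ℚ :=
  ∏ i : Fin (n - 1),
    (X (⟨i.1, by have := i.isLt; omega⟩ : Fin n) - X ⟨i.1 + 1, by have := i.isLt; omega⟩)

/-- Divided symmetrization `⟨f⟩_n = Σ_{w ∈ S_n} w·(f / ∏ (x_i - x_{i+1}))`, as an element of
the fraction field of `ℚ[x_1,...,x_n]`. -/
noncomputable def DS (n : ℕ) (f : MvPolynomial (Fin n) ℚ) :
    FractionRing (MvPolynomial (Fin n) ℚ) :=
  ∑ w : Equiv.Perm (Fin n),
    algebraMap (MvPolynomial (Fin n) ℚ) _ (rename w f) /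
      algebraMap (MvPolynomial (Fin n) ℚ) _ (rename w (denomDS n))

/-- The set `S_c ⊆ {1,...,n-1}`, encoded 0-based: `j : Fin (n-1)` corresponds to
`k = j+1`, and `j ∈ S_c` iff `c_1 + ⋯ + c_{j+1} < j+1`. -/
def Sset (n : ℕ) (c : Fin n → ℕ) : Finset (Fin (n - 1)) :=
  Finset.univ.filter
    (fun j => ∑ i ∈ Finset.univ.filter (fun i : Fin n => i.1 ≤ j.1), c i < j.1 + 1)

/-- The descent set of `w ∈ S_n`, encoded 0-based: `j : Fin (n-1)` corresponds to
the descent position `k = j+1`, i.e. `w(j) > w(j+1)` (0-based). -/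
def desSet (n : ℕ) (w : Equiv.Perm (Fin n)) : Finset (Fin (n - 1)) :=
  Finset.univ.filter
    (fun j => w ⟨j.1 + 1, by have := j.isLt; omega⟩ < w ⟨j.1, by have := j.isLt; omega⟩)

/-- `β(S)`: the number of permutations of `{1,...,n}` with descent set exactly `S`. -/
noncomputable def betaNum (n : ℕ) (S : Finset (Fin (n - 1))) : ℕ :=
  (Finset.univ.filter (fun w : Equiv.Perm (Fin n) => desSet n w = S)).card

/-!
The product of `⟨f⟩_n` and the Vandermonde polynomial is an alternating polynomial of the same
degree as the Vandermonde polynomial, hence a constant multiple `K` of it. So the symmetrization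
takes the same value `K` in every field in which the variables are sent to distinct elements.

In a field of Hahn series with `x_1 ≫ x_2 ≫ ⋯`, that value can be read off from constant terms. In
the summand of `w`, the `i`-th factor of the denominator contributes a geometric series in
`x_{w(i+1)} / x_{w(i)}`, or in its inverse if `i` is a descent of `w`, and the constant term of the
product needs exactly the power `c_1 + ⋯ + c_i - i` of `x_{w(i+1)} / x_{w(i)}`. That power occurs
iff its sign matches, with coefficient `-1` at a descent, so the constant term is `(-1) ^ |S_c|` if
the descent set of `w` is `S_c` and `0` otherwise.
-/

theorem homogeneousComponent_add_mul {σ R : Type*} [CommSemiring R] {p : MvPolynomial σ R}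
    {d : ℕ} (hp : p.IsHomogeneous d) (k : ℕ) (q : MvPolynomial σ R) :
    homogeneousComponent (d + k) (p * q) = p * homogeneousComponent k q := by
  conv_lhs => rw [← sum_homogeneousComponent q, Finset.mul_sum, map_sum]
  have hterm (i : ℕ) : homogeneousComponent (d + k) (p * homogeneousComponent i q) =
      if i = k then p * homogeneousComponent k q else 0 := by
    rw [homogeneousComponent_of_mem (hp.mul (homogeneousComponent_isHomogeneous i q))]
    grind
  simp only [hterm, Finset.sum_ite_eq', Finset.mem_range]
  split_ifs with hk
  · rfl
  · rw [homogeneousComponent_eq_zero _ _ (by omega), mul_zero]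

theorem isHomogeneous_of_mul_left {σ R : Type*} [CommRing R] [IsDomain R]
    {p q : MvPolynomial σ R} {d e : ℕ} (hp : p.IsHomogeneous d)
    (hpq : (p * q).IsHomogeneous (d + e)) (hp0 : p ≠ 0) : q.IsHomogeneous e := by
  have h : p * q = p * homogeneousComponent e q := by
    rw [← homogeneousComponent_add_mul hp, homogeneousComponent_eq_self hpq]
  rw [mul_left_cancel₀ hp0 h]
  exact homogeneousComponent_isHomogeneous e q

theorem isHomogeneous_X_sub_X {σ R : Type*} [CommRing R] (a b : σ) :
    (X a - X b : MvPolynomial σ R).IsHomogeneous 1 :=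
  (isHomogeneous_X R a).sub (isHomogeneous_X R b)

theorem isHomogeneous_prod_X_pow {σ R : Type*} [Fintype σ] [CommSemiring R] (c : σ → ℕ) :
    (∏ i, X i ^ c i : MvPolynomial σ R).IsHomogeneous (∑ i, c i) :=
  IsHomogeneous.prod _ _ _ fun i _ => isHomogeneous_X_pow i (c i)

section Alternating

variable {σ R : Type*} [Fintype σ] [DecidableEq σ] [CommRing R]

/-- A polynomial is alternating if permuting its variables by `w` multiplies it by `sign w`. -/
def IsAlternating (p : MvPolynomial σ R) : Prop :=
  ∀ w : Equiv.Perm σ, rename w p = Equiv.Perm.sign w • p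

/-- The alternating sum of all permutations of the variables of `p`. -/
noncomputable def alternatization (p : MvPolynomial σ R) : MvPolynomial σ R :=
  ∑ w : Equiv.Perm σ, Equiv.Perm.sign w • rename w p

theorem isAlternating_alternatization (p : MvPolynomial σ R) :
    IsAlternating (alternatization p) := by
  intro u
  rw [alternatization, map_sum, Finset.smul_sum,
    ← Equiv.sum_comp (Equiv.mulLeft u) fun w => Equiv.Perm.sign u • _]
  refine Finset.sum_congr rfl fun w _ => ?_
  rw [map_zsmul_unit, rename_rename, Equiv.coe_mulLeft, Equiv.Perm.sign_mul, smul_smul,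
    ← mul_assoc, Int.units_mul_self, one_mul, Equiv.Perm.coe_mul]

theorem isHomogeneous_alternatization {p : MvPolynomial σ R} {d : ℕ} (hp : p.IsHomogeneous d) :
    (alternatization p).IsHomogeneous d :=
  IsHomogeneous.sum _ _ _ fun w _ =>
    (homogeneousSubmodule σ R d).toAddSubgroup.zsmul_mem hp.rename_isHomogeneous
      (Equiv.Perm.sign w : ℤ)

theorem IsAlternating.sub {p q : MvPolynomial σ R} (hp : IsAlternating p)
    (hq : IsAlternating q) : IsAlternating (p - q) := fun w => by
  rw [map_sub, hp, hq, smul_sub]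

theorem IsAlternating.C_mul {p : MvPolynomial σ R} (hp : IsAlternating p) (r : R) :
    IsAlternating (C r * p) := fun w => by
  rw [map_mul, rename_C, hp, mul_smul_comm]

theorem IsAlternating.coeff_mapDomain {p : MvPolynomial σ R} (hp : IsAlternating p)
    (w : Equiv.Perm σ) (m : σ →₀ ℕ) :
    coeff (m.mapDomain w) p = Equiv.Perm.sign w • coeff m p := by
  have h := coeff_rename_mapDomain w w.injective p m
  rw [hp, Units.smul_def, coeff_smul, ← Units.smul_def] at h
  rw [← h, smul_smul, Int.units_mul_self, one_smul]

theorem IsAlternating.coeff_eq_zero_of_not_injective [IsAddTorsionFree R] {p : MvPolynomial σ R}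
    (hp : IsAlternating p) {m : σ →₀ ℕ} (hm : ¬Function.Injective m) : coeff m p = 0 := by
  obtain ⟨i, j, hij, hne⟩ := Function.not_injective_iff.1 hm
  have hswap : m.mapDomain (Equiv.swap i j) = m := by
    ext k
    rw [Finsupp.mapDomain_equiv_apply, Equiv.symm_swap, Equiv.swap_apply_def]
    split_ifs <;> simp [*]
  have h := hp.coeff_mapDomain (Equiv.swap i j) m
  rw [hswap, Equiv.Perm.sign_swap hne, Units.neg_smul, one_smul] at h
  exact self_eq_neg.1 h

theorem sum_map_rename_div_map_rename {F : Type*} [Field F] (φ : MvPolynomial σ R →+* F)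
    {p q r : MvPolynomial σ R} (hqr : IsAlternating (q * r)) (h0 : φ (q * r) ≠ 0) :
    ∑ w : Equiv.Perm σ, φ (rename w p) / φ (rename w q) =
      φ (alternatization (p * r)) / φ (q * r) := by
  rw [alternatization, map_sum, Finset.sum_div]
  refine Finset.sum_congr rfl fun w _ => ?_
  have hqr' : φ (rename w q) * φ (rename w r) = Equiv.Perm.sign w • φ (q * r) := by
    rw [← map_mul, ← map_mul, hqr, map_zsmul_unit]
  have hpr : φ (rename w (p * r)) = φ (rename w p) * φ (rename w r) := by
    rw [map_mul, map_mul]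
  have hq0 : φ (rename w q) ≠ 0 :=
    left_ne_zero_of_mul (hqr'.trans_ne ((smul_ne_zero_iff_ne _).2 h0))
  rw [div_eq_div_iff hq0 h0, map_zsmul_unit, hpr, smul_mul_assoc, mul_assoc,
    mul_comm (φ (rename w r)), hqr', mul_smul_comm, smul_smul, Int.units_mul_self, one_smul]

end Alternating

section Vandermonde

variable {n : ℕ} {R : Type*} [CommRing R]

/-- The exponent vector `(0, 1, …, n - 1)`, which up to permutation is the only injective one
of its degree. -/
noncomputable def staircase (n : ℕ) : Fin n →₀ ℕ :=
  Finsupp.equivFunOnFinite.symm fun i => i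

/-- The Vandermonde polynomial `∏_{i < j} (x_j - x_i)`. -/
noncomputable def vandermondePoly (n : ℕ) (R : Type*) [CommRing R] : MvPolynomial (Fin n) R :=
  (Matrix.vandermonde X).det

theorem vandermondePoly_eq_alternatization :
    vandermondePoly n R = alternatization (monomial (staircase n) 1) := by
  have hmon : monomial (staircase n) (1 : R) = ∏ i : Fin n, X i ^ (i : ℕ) := by
    rw [monomial_eq, C_1, one_mul, Finsupp.prod_fintype _ _ fun i => pow_zero _]
    rfl
  simp only [vandermondePoly, alternatization, Matrix.det_apply, Matrix.vandermonde_apply, hmon,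
    map_prod, map_pow, rename_X]

theorem isAlternating_vandermondePoly : IsAlternating (vandermondePoly n R) :=
  vandermondePoly_eq_alternatization (R := R) ▸ isAlternating_alternatization _

theorem isHomogeneous_vandermondePoly :
    (vandermondePoly n R).IsHomogeneous (staircase n).degree :=
  vandermondePoly_eq_alternatization (R := R) ▸
    isHomogeneous_alternatization (isHomogeneous_monomial _ rfl)

theorem staircase_mapDomain_eq_iff {w : Equiv.Perm (Fin n)} :
    (staircase n).mapDomain w = staircase n ↔ w = 1 := by
  refine ⟨fun h => Equiv.ext fun i => ?_, ?_⟩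
  · have := DFunLike.congr_fun h (w i)
    rw [Finsupp.mapDomain_apply w.injective] at this
    exact (Fin.ext this).symm
  · rintro rfl
    exact Finsupp.mapDomain_id

theorem coeff_staircase_vandermondePoly : coeff (staircase n) (vandermondePoly n R) = 1 := by
  simp only [vandermondePoly_eq_alternatization, alternatization, rename_monomial, Units.smul_def,
    coeff_sum, coeff_smul, coeff_monomial, staircase_mapDomain_eq_iff]
  simp

theorem map_vandermondePoly_ne_zero {S : Type*} [CommRing S] [IsDomain S]
    {φ : MvPolynomial (Fin n) R →+* S} (hφ : Function.Injective fun i => φ (X i)) :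
    φ (vandermondePoly n R) ≠ 0 := by
  have hmap : φ.mapMatrix (Matrix.vandermonde X) = Matrix.vandermonde fun i => φ (X i) := by
    ext i j
    exact map_pow φ _ _
  rw [vandermondePoly, RingHom.map_det, hmap]
  exact Matrix.det_vandermonde_ne_zero_iff.2 hφ

theorem vandermondePoly_ne_zero [IsDomain R] : vandermondePoly n R ≠ 0 :=
  map_vandermondePoly_ne_zero (φ := RingHom.id _) X_injective

theorem exists_perm_mapDomain_staircase_eq {m : Fin n →₀ ℕ} (hm : Function.Injective m)
    (hdeg : m.degree = (staircase n).degree) :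
    ∃ w : Equiv.Perm (Fin n), (staircase n).mapDomain w = m := by
  set w := Tuple.sort m
  have hmono : StrictMono (m ∘ w) :=
    (Tuple.monotone_sort m).strictMono_of_injective (hm.comp w.injective)
  have hle : ∀ i : Fin n, (i : ℕ) ≤ m (w i) := fun i => by
    simpa using Finset.card_le_card_of_injOn (s := Finset.Iio i) (t := Finset.range (m (w i)))
      (m ∘ w) (by simpa [Set.MapsTo] using fun j hj => hmono hj) hmono.injective.injOn
  have hsum : ∑ i : Fin n, (i : ℕ) = ∑ i, m (w i) := by
    rw [Equiv.sum_comp w m, ← Finsupp.degree_eq_sum, hdeg, Finsupp.degree_eq_sum]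
    rfl
  have heq := (Finset.sum_eq_sum_iff_of_le fun i _ => hle i).1 hsum
  refine ⟨w, Finsupp.ext fun j => ?_⟩
  obtain ⟨i, rfl⟩ := w.surjective j
  rw [Finsupp.mapDomain_apply w.injective]
  exact heq i (Finset.mem_univ i)

theorem IsAlternating.eq_C_mul_vandermondePoly [IsAddTorsionFree R] {p : MvPolynomial (Fin n) R}
    (halt : IsAlternating p) (hp : p.IsHomogeneous (staircase n).degree) :
    p = C (coeff (staircase n) p) * vandermondePoly n R := by
  set q := p - C (coeff (staircase n) p) * vandermondePoly n R with hq
  have hqalt : IsAlternating q := halt.sub (isAlternating_vandermondePoly.C_mul _)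
  have hqhom : q.IsHomogeneous (staircase n).degree :=
    hp.sub (isHomogeneous_vandermondePoly.C_mul _)
  have hq0 : coeff (staircase n) q = 0 := by
    rw [hq, coeff_sub, coeff_C_mul, coeff_staircase_vandermondePoly, mul_one, sub_self]
  suffices q = 0 from sub_eq_zero.1 this
  ext m
  rw [coeff_zero]
  by_cases hinj : Function.Injective m
  · by_cases hdeg : m.degree = (staircase n).degree
    · obtain ⟨w, rfl⟩ := exists_perm_mapDomain_staircase_eq hinj hdeg
      rw [hqalt.coeff_mapDomain, hq0, smul_zero]
    · exact hqhom.coeff_eq_zero hdeg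
  · exact hqalt.coeff_eq_zero_of_not_injective hinj

theorem exists_sum_map_rename_div_eq [IsDomain R] [IsAddTorsionFree R]
    {p q : MvPolynomial (Fin n) R} {d : ℕ} (hp : p.IsHomogeneous d) (hq : q.IsHomogeneous d)
    (hdvd : q ∣ vandermondePoly n R) :
    ∃ K : R, ∀ {F : Type*} [Field F] (φ : MvPolynomial (Fin n) R →+* F),
      Function.Injective (fun i => φ (X i)) →
        ∑ w : Equiv.Perm (Fin n), φ (rename w p) / φ (rename w q) = φ (C K) := by
  obtain ⟨r, hr⟩ := hdvd
  have halt : IsAlternating (q * r) := hr ▸ isAlternating_vandermondePoly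
  have hqr0 : q * r ≠ 0 := hr ▸ vandermondePoly_ne_zero
  have hqr : (q * r).IsHomogeneous (staircase n).degree := hr ▸ isHomogeneous_vandermondePoly
  have hdeg : (staircase n).degree = d + r.totalDegree := by
    rw [← hqr.totalDegree hqr0, totalDegree_mul_of_isDomain (left_ne_zero_of_mul hqr0)
      (right_ne_zero_of_mul hqr0), hq.totalDegree (left_ne_zero_of_mul hqr0)]
  have hrhom : r.IsHomogeneous r.totalDegree :=
    isHomogeneous_of_mul_left hq (hdeg ▸ hqr) (left_ne_zero_of_mul hqr0)
  have hpr : (alternatization (p * r)).IsHomogeneous (staircase n).degree :=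
    hdeg ▸ isHomogeneous_alternatization (hp.mul hrhom)
  refine ⟨coeff (staircase n) (alternatization (p * r)), fun φ hφ => ?_⟩
  have hφ0 : φ (q * r) ≠ 0 := hr ▸ map_vandermondePoly_ne_zero hφ
  rw [sum_map_rename_div_map_rename φ halt hφ0, div_eq_iff hφ0, ← hr, ← map_mul]
  exact congrArg φ ((isAlternating_alternatization _).eq_C_mul_vandermondePoly hpr)

end Vandermonde

theorem linearIndependent_succ_sub_castSucc {R M : Type*} [Ring R] [AddCommGroup M] [Module R M]
    {m : ℕ} {v : Fin (m + 1) → M} (hv : LinearIndependent R v) :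
    LinearIndependent R fun i : Fin m => v i.succ - v i.castSucc := by
  refine Fintype.linearIndependent_iff.2 fun b hb => ?_
  -- `r j - l j` is the coefficient of `v j` in the relation `hb`
  let l : Fin (m + 1) → R := Fin.snoc b 0
  let r : Fin (m + 1) → R := Fin.cons 0 b
  have hsum : ∑ j, (r j - l j) • v j = 0 := by
    simp only [sub_smul, Finset.sum_sub_distrib]
    rw [Fin.sum_univ_succ, Fin.sum_univ_castSucc fun j => l j • v j]
    simpa [l, r, smul_sub, Finset.sum_sub_distrib] using hb
  have hrl (j : Fin (m + 1)) : r j = l j :=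
    sub_eq_zero.1 (Fintype.linearIndependent_iff.1 hv _ hsum j)
  have hr (j : Fin (m + 1)) : r j = 0 := by
    induction j using Fin.induction with
    | zero => rfl
    | succ i ih =>
      calc r i.succ = l i.castSucc := (Fin.snoc_castSucc (α := fun _ => R) 0 b i).symm
        _ = 0 := (hrl i.castSucc).symm.trans ih
  exact fun i => hr i.succ

theorem sum_smul_eq_sum_Iic_smul_sub_add {R M : Type*} [Ring R] [AddCommGroup M] [Module R M]
    {m : ℕ} (a : Fin (m + 1) → R) (v : Fin (m + 1) → M) :
    ∑ j, a j • v j = ∑ i : Fin m, (∑ j ∈ Finset.Iic i.castSucc, a j) • (v i.castSucc - v i.succ) +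
      (∑ j, a j) • v (Fin.last m) := by
  induction m with
  | zero => simp
  | succ m ih =>
    rw [Fin.sum_univ_castSucc, ih (fun j => a j.castSucc) (fun j => v j.castSucc),
      Fin.sum_univ_castSucc a]
    simp only [Fin.sum_Iic_castSucc]
    rw [Fin.sum_univ_castSucc (n := m) (fun i => (∑ j ∈ Finset.Iic i, a j.castSucc) • _)]
    simp only [Fin.sum_Iic_castSucc, ← Fin.top_eq_last, Finset.Iic_top]
    simp only [Fin.top_eq_last, Fin.succ_last, Fin.succ_castSucc, add_smul, smul_sub,
      Fin.sum_univ_castSucc fun j : Fin (m + 1) => a j.castSucc]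
    abel

theorem sum_update_smul {ι R M : Type*} [Fintype ι] [DecidableEq ι] [Ring R] [AddCommGroup M]
    [Module R M] (a : ι → R) (d : ι → M) (j : ι) (r : R) :
    ∑ i, Function.update a j r i • d i = ∑ i, Function.update a j 0 i • d i + r • d j := by
  have hcompl (s : R) : ∑ i ∈ {j}ᶜ, Function.update a j s i • d i = ∑ i ∈ {j}ᶜ, a i • d i :=
    Finset.sum_congr rfl fun i hi => by rw [Function.update_of_ne (by simpa using hi)]
  simp only [Fintype.sum_eq_add_sum_compl j, hcompl, Function.update_self, zero_smul, zero_add,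
    add_comm]

section Hahn

theorem single_one_injective {Γ R : Type*} [Zero Γ] [LinearOrder Γ] [MulZeroOneClass R]
    [Nontrivial R] : Function.Injective fun x : Γ => HahnSeries.single x (1 : R) :=
  fun x y h => by
    have := congrArg HahnSeries.order h
    rwa [HahnSeries.order_single one_ne_zero, HahnSeries.order_single one_ne_zero] at this

theorem one_sub_single_ne_zero {Γ R : Type*} [Zero Γ] [LinearOrder Γ] [Ring R] [Nontrivial R]
    {d : Γ} (hd : d ≠ 0) : (1 - HahnSeries.single d (1 : R)) ≠ 0 := by
  rw [sub_ne_zero, ← HahnSeries.single_zero_one]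
  exact fun h => hd (single_one_injective h).symm

/-- The coefficient of `t^(k • d)` in the expansion of `1 / (1 - t^d)` as a Hahn series, which is
`∑_{k ≥ 0} t^(k • d)` for positive `d` and `-∑_{k < 0} t^(k • d)` for negative `d`. -/
def geomCoeff {Γ : Type*} (R : Type*) [AddCommGroup Γ] [LinearOrder Γ] [Ring R] (d : Γ) (k : ℤ) :
    R :=
  if 0 < d ↔ 0 ≤ k then if 0 < d then 1 else -1 else 0

theorem prod_geomCoeff {ι Γ R : Type*} [Fintype ι] [DecidableEq ι] [AddCommGroup Γ] [LinearOrder Γ]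
    [CommRing R] {d : ι → Γ} {a : ι → ℤ} {S T : Finset ι} (hd : ∀ i, 0 < d i ↔ i ∉ S)
    (ha : ∀ i, 0 ≤ a i ↔ i ∉ T) :
    ∏ i, geomCoeff R (d i) (a i) = if S = T then (-1) ^ T.card else 0 := by
  have hiff : (∀ i, (0 < d i ↔ 0 ≤ a i)) ↔ S = T := by
    simp only [hd, ha, not_iff_not, ← Finset.ext_iff]
  simp only [geomCoeff, Finset.prod_ite_zero, Finset.mem_univ, true_imp_iff, hiff]
  split_ifs with h
  · simp only [hd, ite_not, Finset.prod_ite_mem, Finset.univ_inter, Finset.prod_const, h]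
  · rfl

variable {Γ R K : Type*} [AddCommGroup Γ] [LinearOrder Γ] [IsOrderedAddMonoid Γ] [CommRing R]
  [Field K]

theorem coeff_add_zsmul_of_mul_one_sub_single_of_pos {d g : Γ} {Y H : HahnSeries Γ R} (hd : 0 < d)
    (hY : Y * (1 - HahnSeries.single d 1) = H) (hH : ∀ k : ℤ, k ≠ 0 → H.coeff (g + k • d) = 0)
    (k : ℤ) : Y.coeff (g + k • d) = if 0 ≤ k then H.coeff g else 0 := by
  have hrec (x : Γ) : Y.coeff x = Y.coeff (x - d) + H.coeff x := by
    rw [← hY, mul_sub, mul_one, HahnSeries.coeff_sub, HahnSeries.coeff_mul_single, mul_one]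
    abel
  have hpred (k : ℤ) : g + k • d - d = g + (k - 1) • d := by
    rw [sub_zsmul, one_zsmul, ← sub_eq_add_neg, add_sub_assoc]
  have hneg : ∀ k : ℤ, k < 0 → Y.coeff (g + k • d) = 0 := by
    -- the recursion would propagate a nonzero coefficient to infinitely many smaller exponents
    by_contra! ⟨k, hk, hYk⟩
    let s : Set Γ := {x ∈ Y.support | ∃ k : ℤ, k < 0 ∧ x = g + k • d}
    have hs : s.IsWF := Y.isWF_support.mono fun _ hx => hx.1
    have hne : s.Nonempty := ⟨_, hYk, k, hk, rfl⟩
    obtain ⟨hmin, l, hl, hl_eq⟩ := hs.min_mem hne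
    refine hs.not_lt_min hne ⟨?_, l - 1, by omega, rfl⟩ (?_ : g + (l - 1) • d < hs.min hne)
    · rw [HahnSeries.mem_support, hl_eq, hrec, hH l hl.ne, add_zero, hpred] at hmin
      exact hmin
    · rw [hl_eq, ← hpred]
      exact sub_lt_self _ hd
  split_ifs with hk
  · induction k, hk using Int.leInduction with
    | base =>
      rw [hrec, hpred, hneg _ (by omega), zero_add, zero_zsmul, add_zero]
    | succ k hk ih =>
      rw [hrec, hpred, hH _ (by omega), add_zero, add_sub_cancel_right, ih]
  · exact hneg k (by omega)

theorem coeff_add_zsmul_of_mul_one_sub_single {d g : Γ} {Y H : HahnSeries Γ R} (hd : d ≠ 0)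
    (hY : Y * (1 - HahnSeries.single d 1) = H) (hH : ∀ k : ℤ, k ≠ 0 → H.coeff (g + k • d) = 0)
    (k : ℤ) : Y.coeff (g + k • d) = geomCoeff R d k * H.coeff g := by
  rcases hd.lt_or_gt with hneg | hpos
  · -- `Y * (1 - t^d) = -t^d * Y * (1 - t^(-d))`
    have hY' : -(HahnSeries.single d 1 * Y) * (1 - HahnSeries.single (-d) 1) = H := by
      have hcancel : (HahnSeries.single d 1 * HahnSeries.single (-d) 1 : HahnSeries Γ R) = 1 := by
        rw [HahnSeries.single_mul_single, add_neg_cancel, mul_one, HahnSeries.single_zero_one]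
      linear_combination hY + Y * hcancel
    have h := coeff_add_zsmul_of_mul_one_sub_single_of_pos (neg_pos.2 hneg) hY'
      (fun l hl => by rw [smul_neg, ← neg_smul]; exact hH (-l) (neg_ne_zero.2 hl)) (-k - 1)
    have hexp : g + (-k - 1) • -d = g + k • d + d := by
      rw [sub_zsmul, neg_zsmul, one_zsmul, smul_neg]
      abel
    rw [hexp, HahnSeries.coeff_neg, HahnSeries.coeff_single_mul, add_sub_cancel_right, one_mul,
      neg_eq_iff_eq_neg] at h
    rw [h, geomCoeff]
    grind
  · rw [coeff_add_zsmul_of_mul_one_sub_single_of_pos hpos hY hH, geomCoeff]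
    grind

theorem coeff_finsetProd_one_sub_single_inv {ι : Type*} [Fintype ι] [DecidableEq ι] {d : ι → Γ}
    (hd : LinearIndependent ℤ d) (s : Finset ι) (a : ι → ℤ) :
    (∏ i ∈ s, (1 - HahnSeries.single (d i) (1 : K))⁻¹).coeff (∑ i, a i • d i) =
      ∏ i, if i ∈ s then geomCoeff K (d i) (a i) else if a i = 0 then 1 else 0 := by
  induction s using Finset.induction_on generalizing a with
  | empty =>
    have ha : ∑ i, a i • d i = 0 ↔ ∀ i, a i = 0 :=
      ⟨Fintype.linearIndependent_iff.1 hd a, fun h => by simp [h]⟩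
    simp only [Finset.prod_empty, HahnSeries.coeff_one, ha, Finset.notMem_empty, if_false,
      Finset.prod_ite_zero, Finset.prod_const_one, Finset.mem_univ, true_imp_iff]
  | insert j s hj ih =>
    set g := ∑ i, Function.update a j 0 i • d i
    set H := ∏ i ∈ s, (1 - HahnSeries.single (d i) (1 : K))⁻¹
    have hexp (k : ℤ) : ∑ i, Function.update a j k i • d i = g + k • d j :=
      sum_update_smul a d j k
    have hY : (∏ i ∈ insert j s, (1 - HahnSeries.single (d i) (1 : K))⁻¹) *
        (1 - HahnSeries.single (d j) 1) = H := by
      rw [Finset.prod_insert hj, mul_comm,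
        mul_inv_cancel_left₀ (one_sub_single_ne_zero (hd.ne_zero j))]
    have hH (k : ℤ) (hk : k ≠ 0) : H.coeff (g + k • d j) = 0 := by
      rw [← hexp, ih]
      exact Finset.prod_eq_zero (Finset.mem_univ j) (by simp [hj, hk])
    have h := coeff_add_zsmul_of_mul_one_sub_single (hd.ne_zero j) hY hH (a j)
    rw [← hexp, Function.update_eq_self] at h
    rw [h, ih, Fintype.prod_eq_mul_prod_compl j, Fintype.prod_eq_mul_prod_compl j, ← mul_assoc]
    congr 1
    · simp [hj]
    · refine Finset.prod_congr rfl fun i hi => ?_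
      have hij : i ≠ j := by simpa using hi
      simp only [Finset.mem_insert, hij, false_or, Function.update_of_ne hij]

theorem coeff_prod_one_sub_single_inv {ι : Type*} [Fintype ι] {d : ι → Γ}
    (hd : LinearIndependent ℤ d) (a : ι → ℤ) :
    (∏ i, (1 - HahnSeries.single (d i) (1 : K))⁻¹).coeff (∑ i, a i • d i) =
      ∏ i, geomCoeff K (d i) (a i) := by
  classical
  simpa using coeff_finsetProd_one_sub_single_inv (K := K) hd Finset.univ a

end Hahn

section HahnEval

/-- The ring homomorphism sending the variable `X a` to the monomial `t^(v a)`. -/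
noncomputable def hahnEval {σ Γ : Type*} (R : Type*) [CommRing R] [AddCommGroup Γ] [LinearOrder Γ]
    [IsOrderedAddMonoid Γ] (v : σ → Γ) : MvPolynomial σ R →+* HahnSeries Γ R :=
  eval₂Hom HahnSeries.C fun a => HahnSeries.single (v a) 1

variable {σ Γ R : Type*} [AddCommGroup Γ] [LinearOrder Γ] [IsOrderedAddMonoid Γ] [CommRing R]

theorem hahnEval_X (v : σ → Γ) (a : σ) : hahnEval R v (X a) = HahnSeries.single (v a) 1 :=
  eval₂Hom_X' _ _ a

theorem hahnEval_C (v : σ → Γ) (r : R) : hahnEval R v (C r) = HahnSeries.C r :=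
  eval₂Hom_C _ _ r

theorem hahnEval_rename {τ : Type*} (v : τ → Γ) (e : σ → τ) (p : MvPolynomial σ R) :
    hahnEval R v (rename e p) = hahnEval R (v ∘ e) p := by
  simp only [hahnEval, coe_eval₂Hom, eval₂_rename]
  rfl

theorem hahnEval_X_injective [Nontrivial R] {v : σ → Γ} (hv : Function.Injective v) :
    Function.Injective fun a => hahnEval R v (X a) := by
  simp only [hahnEval_X]
  exact single_one_injective.comp hv

theorem prod_single_one {ι : Type*} (s : Finset ι) (g : ι → Γ) :
    ∏ i ∈ s, HahnSeries.single (g i) (1 : R) = HahnSeries.single (∑ i ∈ s, g i) 1 := by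
  induction s using Finset.cons_induction with
  | empty => simp
  | cons i s hi ih =>
    rw [Finset.prod_cons, Finset.sum_cons, ih, HahnSeries.single_mul_single, mul_one]

theorem hahnEval_prod_X_pow [Fintype σ] (v : σ → Γ) (c : σ → ℕ) :
    hahnEval R v (∏ i, X i ^ c i) = HahnSeries.single (∑ i, c i • v i) 1 := by
  simp only [map_prod, map_pow, hahnEval_X, HahnSeries.single_pow, one_pow, prod_single_one]

end HahnEval

section DividedSymmetrization

variable {Γ : Type*} [AddCommGroup Γ] [LinearOrder Γ] [IsOrderedAddMonoid Γ] {m : ℕ}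

theorem denomDS_succ : denomDS (m + 1) = ∏ i : Fin m, (X i.castSucc - X i.succ) := rfl

theorem isHomogeneous_denomDS (n : ℕ) : (denomDS n).IsHomogeneous (n - 1) := by
  obtain _ | m := n
  · exact isHomogeneous_one _ _
  · simpa [denomDS_succ] using IsHomogeneous.prod Finset.univ _ _ fun (i : Fin m) _ =>
      isHomogeneous_X_sub_X (R := ℚ) i.castSucc i.succ

theorem denomDS_dvd_vandermondePoly (n : ℕ) : denomDS n ∣ vandermondePoly n ℚ := by
  obtain _ | m := n
  · exact one_dvd _
  rw [denomDS_succ, vandermondePoly, Matrix.det_vandermonde, Fin.prod_univ_castSucc]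
  refine (Finset.prod_dvd_prod_of_dvd _ _ fun i _ => ?_).mul_right _
  rw [← neg_sub, neg_dvd]
  exact Finset.dvd_prod_of_mem _ (Finset.mem_Ioi.2 i.castSucc_lt_succ)

theorem exists_DS_eq {n : ℕ} {f : MvPolynomial (Fin n) ℚ} (hf : f.IsHomogeneous (n - 1)) :
    ∃ K : ℚ, DS n f = algebraMap ℚ _ K ∧
      ∀ {F : Type} [Field F] (φ : MvPolynomial (Fin n) ℚ →+* F),
        Function.Injective (fun i => φ (X i)) →
          ∑ w : Equiv.Perm (Fin n), φ (rename w f) / φ (rename w (denomDS n)) = φ (C K) := by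
  obtain ⟨K, hK⟩ := exists_sum_map_rename_div_eq hf (isHomogeneous_denomDS n)
    (denomDS_dvd_vandermondePoly n)
  refine ⟨K, ?_, hK⟩
  rw [IsScalarTower.algebraMap_apply ℚ (MvPolynomial (Fin n) ℚ)]
  exact hK (F := FractionRing (MvPolynomial (Fin n) ℚ)) (algebraMap _ _)
    ((IsFractionRing.injective _ _).comp X_injective)

theorem hahnEval_denomDS (v : Fin (m + 1) → Γ) :
    hahnEval ℚ v (denomDS (m + 1)) = HahnSeries.single (∑ i : Fin m, v i.castSucc) 1 *
      ∏ i : Fin m, (1 - HahnSeries.single (v i.succ - v i.castSucc) 1) := by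
  rw [denomDS_succ, map_prod, ← prod_single_one, ← Finset.prod_mul_distrib]
  refine Finset.prod_congr rfl fun i _ => ?_
  rw [map_sub, hahnEval_X, hahnEval_X, mul_sub, mul_one, HahnSeries.single_mul_single, mul_one,
    add_sub_cancel]

/-- By how much the partial sum `c_1 + ⋯ + c_k` exceeds `k`, where `k = i + 1` as `i` is
0-based. -/
def excess (c : Fin (m + 1) → ℕ) (i : Fin m) : ℤ :=
  ∑ j ∈ Finset.Iic i.castSucc, ((c j : ℤ) - 1)

theorem sum_excess_smul_sub {M : Type*} [AddCommGroup M] {c : Fin (m + 1) → ℕ}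
    (hc : ∑ i, c i = m) (v : Fin (m + 1) → M) :
    ∑ i, excess c i • (v i.succ - v i.castSucc) =
      ∑ i : Fin m, v i.castSucc - ∑ j, c j • v j := by
  have hsum : ∑ j, ((c j : ℤ) - 1) = -1 := by
    rw [Finset.sum_sub_distrib, ← Nat.cast_sum, hc]
    simp
  have hneg (i : Fin m) : excess c i • (v i.succ - v i.castSucc) =
      -(excess c i • (v i.castSucc - v i.succ)) := by
    rw [← smul_neg, neg_sub]
  have habel : ∑ j, ((c j : ℤ) - 1) • v j =
      ∑ i, excess c i • (v i.castSucc - v i.succ) - v (Fin.last m) := by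
    rw [sum_smul_eq_sum_Iic_smul_sub_add, hsum, neg_one_zsmul, ← sub_eq_add_neg]
    rfl
  simp only [sub_smul, natCast_zsmul, one_zsmul, Finset.sum_sub_distrib,
    Fin.sum_univ_castSucc v, ← sub_sub, sub_left_inj] at habel
  simp only [hneg, Finset.sum_neg_distrib]
  rw [← habel, neg_sub]

theorem coeff_zero_hahnEval_prod_X_pow_div_denomDS {c : Fin (m + 1) → ℕ}
    (hc : ∑ i, c i = m) {v : Fin (m + 1) → Γ} (hv : LinearIndependent ℤ v) :
    (hahnEval ℚ v (∏ i, X i ^ c i) / hahnEval ℚ v (denomDS (m + 1))).coeff 0 =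
      ∏ i, geomCoeff ℚ (v i.succ - v i.castSucc) (excess c i) := by
  rw [hahnEval_prod_X_pow, hahnEval_denomDS, div_eq_mul_inv, mul_inv, HahnSeries.inv_single,
    ← mul_assoc, HahnSeries.single_mul_single, inv_one, mul_one, ← Finset.prod_inv_distrib,
    HahnSeries.coeff_single_mul, one_mul,
    ← coeff_prod_one_sub_single_inv (linearIndependent_succ_sub_castSucc hv),
    sum_excess_smul_sub hc]
  congr 1
  abel

theorem mem_desSet_succ {w : Equiv.Perm (Fin (m + 1))} {i : Fin m} :
    i ∈ desSet (m + 1) w ↔ w i.succ < w i.castSucc := by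
  simp only [desSet, Finset.mem_filter, Finset.mem_univ, true_and]
  rfl

theorem mem_Sset_succ {c : Fin (m + 1) → ℕ} {i : Fin m} :
    i ∈ Sset (m + 1) c ↔ excess c i < 0 := by
  have hIic : Finset.univ.filter (fun j : Fin (m + 1) => j.1 ≤ i.1) = Finset.Iic i.castSucc := by
    ext j
    simp [Fin.le_def]
  rw [Sset, Finset.mem_filter_univ, hIic, excess, Finset.sum_sub_distrib, sub_neg]
  simp only [Finset.sum_const, Fin.card_Iic, Fin.val_castSucc, nsmul_eq_mul, mul_one]
  norm_cast

theorem coeff_zero_hahnEval_rename_div_rename {c : Fin (m + 1) → ℕ} (hc : ∑ i, c i = m)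
    {v : Fin (m + 1) → Γ} (hv : LinearIndependent ℤ v) (hmono : StrictMono v)
    (w : Equiv.Perm (Fin (m + 1))) :
    (hahnEval ℚ v (rename w (∏ i, X i ^ c i)) /
        hahnEval ℚ v (rename w (denomDS (m + 1)))).coeff 0 =
      if desSet (m + 1) w = Sset (m + 1) c then (-1) ^ (Sset (m + 1) c).card else 0 := by
  have hdes (i : Fin m) : 0 < v (w i.succ) - v (w i.castSucc) ↔ i ∉ desSet (m + 1) w := by
    rw [sub_pos, hmono.lt_iff_lt, mem_desSet_succ, not_lt, le_iff_lt_or_eq, or_iff_left]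
    exact fun h => i.castSucc_lt_succ.ne (w.injective h)
  have hexc (i : Fin m) : 0 ≤ excess c i ↔ i ∉ Sset (m + 1) c := by
    rw [mem_Sset_succ, not_lt]
  rw [hahnEval_rename, hahnEval_rename,
    coeff_zero_hahnEval_prod_X_pow_div_denomDS hc (hv.comp w w.injective)]
  exact prod_geomCoeff hdes hexc

/-- The exponent vector of the variable `x_i` in the group of Laurent exponents, ordered so that
`x_j / x_i` has positive exponent for `i < j`. -/
noncomputable def laurentExponent {n : ℕ} (i : Fin n) : Colex (Fin n →₀ ℤ) :=
  toColex (Finsupp.single i 1)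

theorem strictMono_laurentExponent {n : ℕ} : StrictMono (laurentExponent (n := n)) := by
  intro i j hij
  refine Finsupp.Colex.lt_iff.2 ⟨j, fun k hk => ?_, ?_⟩
  · simp [laurentExponent, (hij.trans hk).ne, hk.ne]
  · simp [laurentExponent, hij.ne]

theorem linearIndependent_laurentExponent {n : ℕ} :
    LinearIndependent ℤ (laurentExponent (n := n)) :=
  Finsupp.linearIndependent_single_one ℤ (Fin n)

end DividedSymmetrization

/-- Postnikov's formula: for a weak composition `c` of `n-1` with `n` parts,
`⟨x^c⟩_n = (-1)^{|S_c|} β(S_c)`. -/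
theorem stmt8 (n : ℕ) (c : Fin n → ℕ) (hc : ∑ i, c i = n - 1) :
    DS n (∏ i, X i ^ c i) =
      algebraMap ℚ (FractionRing (MvPolynomial (Fin n) ℚ))
        ((-1 : ℚ) ^ (Sset n c).card * (betaNum n (Sset n c) : ℚ)) := by
  obtain _ | m := n
  · have hβ (S : Finset (Fin (0 - 1))) : betaNum 0 S = 1 := by
      rw [betaNum, Finset.filter_true_of_mem fun _ _ => Finset.ext fun i => i.elim0]
      rfl
    simp [DS, denomDS, Sset, hβ]
  have hhom := isHomogeneous_prod_X_pow (R := ℚ) c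
  rw [hc] at hhom
  obtain ⟨K, hDS, hK⟩ := exists_DS_eq hhom
  have hcoeff := congrArg (HahnSeries.coeff · 0) <|
    hK _ (hahnEval_X_injective (R := ℚ) strictMono_laurentExponent.injective)
  simp only [HahnSeries.coeff_sum, coeff_zero_hahnEval_rename_div_rename hc
    linearIndependent_laurentExponent strictMono_laurentExponent, ← Finset.sum_filter, hahnEval_C,
    Finset.sum_const, nsmul_eq_mul, HahnSeries.C_apply, HahnSeries.coeff_single_same] at hcoeff
  rw [hDS, ← hcoeff, betaNum, mul_comm]
end

section
/- Let f be a quasisymmetric function homogeneous of degree n−1. Then for every m with 1 ≤ m ≤ n, ⟨f(x_1,...,x_m)⟩_n = Σ_{i=0}^{m−1} (−1)^i C(n,i) f(1^{m−i}). -/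
open MvPolynomial

open scoped Classical

/-- The monomial quasisymmetric polynomial `M_α(x_1,...,x_m)` in `m` variables. -/
noncomputable def Mq (m ℓ : ℕ) (α : Fin ℓ → ℕ) : MvPolynomial (Fin m) ℚ :=
  ∑ f ∈ Finset.univ.filter (fun f : Fin ℓ → Fin m => StrictMono f),
    ∏ j, X (f j) ^ α j

/-- A general quasisymmetric function homogeneous of degree `n-1`, specified by its
coefficients `c` on the monomial basis, restricted to `m` variables. -/
noncomputable def Pq (n : ℕ) (c : Composition (n - 1) → ℚ) (m : ℕ) :
    MvPolynomial (Fin m) ℚ :=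
  ∑ α : Composition (n - 1), c α • Mq m α.length α.blocksFun

/-!
Evaluate divided symmetrization at points with distinct coordinates. On a product
`(X_i - X_{i+1}) p(X_0, …, X_i) q(X_{i+1}, …)` the first factor cancels one factor of the
denominator, and averaging over the Young subgroup `S_{i+1} × S_{n-i-1}` shows that the divided
symmetrization is a binomial coefficient times the product of those of `p` and `q`.

Rotating the variables cyclically shows that constants have divided symmetrization `0` for `n > 1`;
hence so do power sums, since symmetric factors can be pulled out. The differences
`X_j ^ q - X_{j+1} ^ q` are sums of products as above, so by induction on `n` the power `X_j ^ q`
has divided symmetrization `0` for `q < n - 1` and `(-1) ^ j * C(n - 1, j)` for `q = n - 1`.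

For a monomial quasisymmetric polynomial, summation by parts moves one unit of the largest variable
`X_m` into the preceding exponent at the cost of terms containing a factor `X_k - X_{k+1}`, which
vanish by induction on `n`. Merging all parts of the composition in this way leaves a combination
of single powers with binomial coefficients.
-/

section Sums

open Finset Equiv

theorem eq_zero_of_eq_succ_of_sum_range_eq_zero {M : Type*} [AddCommMonoid M]
    [IsAddTorsionFree M] {n : ℕ} {v : ℕ → M} (hv : ∀ j, j + 1 < n → v j = v (j + 1))
    (hsum : ∑ j ∈ range n, v j = 0) {j : ℕ} (hj : j < n) : v j = 0 := by
  have hconst : ∀ j < n, v j = v 0 := fun j => by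
    induction j with
    | zero => exact fun _ => rfl
    | succ j ih => exact fun hj => (hv j hj).symm.trans (ih (by omega))
  rw [sum_congr rfl fun j hj => hconst j (mem_range.1 hj), sum_const, card_range,
    nsmul_eq_zero_iff] at hsum
  exact (hconst j hj).trans (hsum.resolve_right (by omega))

theorem sum_range_sum_range_choose_mul {S : Type*} [Semiring S] (v : ℕ → S) (s m : ℕ) :
    ∑ i ∈ range m, ∑ j ∈ range i, ((i - 1 - j).choose s : S) * v j =
      ∑ j ∈ range m, ((m - 1 - j).choose (s + 1) : S) * v j := by
  induction m with
  | zero => rfl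
  | succ m ih =>
    rw [sum_range_succ, ih, ← sum_add_distrib, sum_range_succ, Nat.add_sub_cancel, Nat.sub_self,
      Nat.choose_zero_succ, Nat.cast_zero, zero_mul, add_zero]
    refine sum_congr rfl fun j hj => ?_
    have hj := mem_range.1 hj
    rw [show m - j = m - 1 - j + 1 by omega, Nat.choose_succ_succ]
    push_cast
    rw [add_mul, add_comm]

theorem sum_neg_one_pow_mul_choose_mul_choose {n s : ℕ} (h : s < n) :
    ∑ j ∈ range (n + 1), (-1 : ℤ) ^ j * n.choose j * (n - j).choose s = 0 := by
  have hdiff := fwdDiff_iter_choose_zero s n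
  rw [if_neg h.ne', fwdDiff_iter_eq_sum_shift, ← sum_range_reflect] at hdiff
  rw [← hdiff]
  refine sum_congr rfl fun j hj => ?_
  have hj := mem_range_succ_iff.1 hj
  simp [Nat.sub_sub_self hj, Nat.choose_symm hj]

theorem sum_neg_one_pow_mul_choose_succ_mul_choose_succ (n s m : ℕ) :
    ∑ i ∈ range m, (-1 : ℤ) ^ i * (n + 1).choose i * (m - i).choose (s + 1) =
      ∑ j ∈ range m, (m - 1 - j).choose s * ((-1 : ℤ) ^ j * n.choose j) := by
  cases m with
  | zero => rfl
  | succ m =>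
    have hpascal : ∑ i ∈ range (m + 1), (-1 : ℤ) ^ i * (n + 1).choose i *
          (m + 1 - i).choose (s + 1) =
        ∑ j ∈ range (m + 1), (-1 : ℤ) ^ j * n.choose j * (m + 1 - j).choose (s + 1) -
          ∑ j ∈ range (m + 1), (-1 : ℤ) ^ j * n.choose j * (m - j).choose (s + 1) := by
      rw [sum_range_succ', sum_range_succ' _ m, sum_range_succ _ m, Nat.sub_self,
        Nat.choose_zero_succ, Nat.cast_zero, mul_zero, add_zero, add_sub_right_comm,
        ← sum_sub_distrib]
      congr 1
      · refine sum_congr rfl fun j _ => ?_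
        rw [Nat.choose_succ_succ, Nat.add_sub_add_right]
        push_cast
        ring
      · simp
    rw [hpascal, ← sum_sub_distrib]
    refine sum_congr rfl fun j hj => ?_
    rw [Nat.succ_sub (mem_range_succ_iff.1 hj), Nat.choose_succ_succ, Nat.add_sub_cancel]
    push_cast
    ring

-- Each translate of the sum by an element of the Young subgroup `S_i × S_k` has the same value.
theorem factorial_mul_sum_perm_add {α S : Type*} [CommSemiring S] {i k : ℕ}
    (f : (Fin i → α) → S) (g : (Fin k → α) → S) (y : Fin (i + k) → α) :
    (i.factorial * k.factorial : S) * ∑ w : Perm (Fin (i + k)),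
        f ((y ∘ w) ∘ Fin.castAdd k) * g ((y ∘ w) ∘ Fin.natAdd i) =
      ∑ w : Perm (Fin (i + k)), (∑ σ : Perm (Fin i), f ((y ∘ w ∘ Fin.castAdd k) ∘ σ)) *
        ∑ τ : Perm (Fin k), g ((y ∘ w ∘ Fin.natAdd i) ∘ τ) := by
  let T (w : Perm (Fin (i + k))) : S := f ((y ∘ w) ∘ Fin.castAdd k) * g ((y ∘ w) ∘ Fin.natAdd i)
  let young (σ : Perm (Fin i)) (τ : Perm (Fin k)) : Perm (Fin (i + k)) :=
    finSumFinEquiv.permCongr (Equiv.sumCongr σ τ)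
  have hT (w : Perm (Fin (i + k))) (σ : Perm (Fin i)) (τ : Perm (Fin k)) :
      f ((y ∘ w ∘ Fin.castAdd k) ∘ σ) * g ((y ∘ w ∘ Fin.natAdd i) ∘ τ) = T (w * young σ τ) := by
    congr 2 <;> funext t <;> simp [young]
  have hinv (π : Perm (Fin (i + k))) : ∑ w, T (w * π) = ∑ w, T w :=
    Equiv.sum_comp (Equiv.mulRight π) T
  simp only [sum_mul_sum, hT]
  rw [sum_comm, sum_congr rfl fun σ _ => sum_comm]
  simp only [hinv, sum_const, card_univ, Fintype.card_perm, Fintype.card_fin, nsmul_eq_mul, T]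
  ring

end Sums

section MvPolynomial

open Finset

variable {R : Type*} [CommSemiring R]

theorem aeval_congr_of_mem_supported {σ A : Type*} [CommSemiring A] [Algebra R A] {s : Set σ}
    {p : MvPolynomial σ R} (hp : p ∈ supported R s) {u v : σ → A} (h : Set.EqOn u v s) :
    aeval u p = aeval v p :=
  hom_congr_vars (f₁ := (aeval u : MvPolynomial σ R →ₐ[R] A).toRingHom)
    (f₂ := (aeval v : MvPolynomial σ R →ₐ[R] A).toRingHom)
    (by ext; simp) (fun i hi _ => by simpa using h (mem_supported.1 hp hi)) rfl

theorem X_pow_mem_supported {i k : ℕ} (h : i < k) (q : ℕ) :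
    (X i ^ q : MvPolynomial ℕ R) ∈ supported R (Set.Iio k) :=
  (supported R (Set.Iio k)).pow_mem (Algebra.subset_adjoin ⟨i, h, rfl⟩) q

theorem X_pow_sub_X_succ_pow {R : Type*} [CommRing R] (i q : ℕ) :
    (X i ^ q - X (i + 1) ^ q : MvPolynomial ℕ R) = ∑ t ∈ range q,
      (X i - X (i + 1)) * (X i ^ t * rename (i + 1 + ·) (X 0 ^ (q - 1 - t))) := by
  simp only [map_pow, rename_X, add_zero, ← mul_sum]
  exact ((Commute.all _ _).mul_geom_sum₂ q).symm

end MvPolynomial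

section MonomialQSym

open Finset

variable {R : Type*} [CommSemiring R]

variable (R) in
/-- The monomial quasisymmetric polynomial in the variables `X 0, …, X (m - 1)`, with the exponents
listed from the variable of largest index down, so that it can be built one variable at a time. -/
noncomputable def revMonomialQSym : List ℕ → ℕ → MvPolynomial ℕ R
  | [], _ => 1
  | a :: β, m => ∑ i ∈ range m, revMonomialQSym β i * X i ^ a

theorem revMonomialQSym_nil (m : ℕ) : revMonomialQSym R [] m = 1 := by
  rw [revMonomialQSym]

theorem revMonomialQSym_cons (a : ℕ) (β : List ℕ) (m : ℕ) :
    revMonomialQSym R (a :: β) m = ∑ i ∈ range m, revMonomialQSym R β i * X i ^ a := by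
  rw [revMonomialQSym]

theorem revMonomialQSym_cons_succ (a : ℕ) (β : List ℕ) (m : ℕ) :
    revMonomialQSym R (a :: β) (m + 1) =
      revMonomialQSym R (a :: β) m + revMonomialQSym R β m * X m ^ a := by
  simp only [revMonomialQSym_cons, sum_range_succ]

theorem revMonomialQSym_mem_supported (β : List ℕ) (m : ℕ) :
    revMonomialQSym R β m ∈ supported R (Set.Iio m) := by
  induction β generalizing m with
  | nil => exact revMonomialQSym_nil (R := R) m ▸ one_mem _
  | cons a β ih =>
    rw [revMonomialQSym_cons]
    refine sum_mem fun i hi => mul_mem ?_ (X_pow_mem_supported (mem_range.1 hi) a)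
    exact supported_mono (Set.Iio_subset_Iio (mem_range.1 hi).le) (ih i)

theorem revMonomialQSym_succ_cons_sub {R : Type*} [CommRing R] (a : ℕ) (β : List ℕ) (m : ℕ) :
    revMonomialQSym R ((a + 1) :: β) m - revMonomialQSym R (a :: β) m * X m =
      ∑ k ∈ range m, (X k - X (k + 1)) * revMonomialQSym R (a :: β) (k + 1) := by
  induction m with
  | zero => simp [revMonomialQSym_cons]
  | succ m ih =>
    rw [sum_range_succ, ← ih, revMonomialQSym_cons_succ, revMonomialQSym_cons_succ]
    ring

theorem eval_one_revMonomialQSym (α : List ℕ) (m : ℕ) :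
    eval (fun _ => (1 : R)) (revMonomialQSym R α m) = m.choose α.length := by
  induction α generalizing m with
  | nil => simp [revMonomialQSym_nil]
  | cons a β ihβ =>
    induction m with
    | zero => simp [revMonomialQSym_cons]
    | succ m ihm =>
      rw [revMonomialQSym_cons_succ, map_add, map_mul, ihm, ihβ, map_pow, eval_X, one_pow, mul_one,
        List.length_cons, Nat.choose_succ_succ, Nat.cast_add, add_comm]

/-- The strictly increasing `ℓ`-tuples of natural numbers below `m`, which index the monomials of
a monomial quasisymmetric polynomial. -/
noncomputable def strictMonoTuples (ℓ m : ℕ) : Finset (Fin ℓ → ℕ) :=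
  {g ∈ Fintype.piFinset fun _ => range m | StrictMono g}

theorem mem_strictMonoTuples {ℓ m : ℕ} {g : Fin ℓ → ℕ} :
    g ∈ strictMonoTuples ℓ m ↔ (∀ j, g j < m) ∧ StrictMono g := by
  simp only [strictMonoTuples, mem_filter, Fintype.mem_piFinset, mem_range]

theorem strictMono_snoc {α : Type*} [Preorder α] {ℓ : ℕ} {g : Fin ℓ → α} {a : α}
    (hg : StrictMono g) (ha : ∀ j, g j < a) : StrictMono (Fin.snoc g a : Fin (ℓ + 1) → α) := by
  intro i j hij
  induction j using Fin.lastCases with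
  | last =>
    obtain ⟨i, rfl⟩ := Fin.eq_castSucc_of_ne_last hij.ne
    simpa using ha i
  | cast j =>
    obtain ⟨i, rfl⟩ := Fin.eq_castSucc_of_ne_last (hij.trans j.castSucc_lt_last).ne
    simpa using hg (Fin.castSucc_lt_castSucc_iff.1 hij)

theorem sum_strictMonoTuples_succ {M : Type*} [AddCommMonoid M] (ℓ m : ℕ)
    (F : (Fin (ℓ + 1) → ℕ) → M) :
    ∑ g ∈ strictMonoTuples (ℓ + 1) m, F g =
      ∑ i ∈ range m, ∑ g ∈ strictMonoTuples ℓ i, F (Fin.snoc g i) := by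
  rw [sum_sigma']
  refine sum_bij' (fun g _ => ⟨g (Fin.last ℓ), Fin.init g⟩) (fun x _ => Fin.snoc x.2 x.1)
    (fun g hg => ?_) (fun x hx => ?_) (fun g _ => Fin.snoc_init_self g) (fun x _ => ?_)
    (fun g _ => by rw [Fin.snoc_init_self])
  · obtain ⟨hlt, hmono⟩ := mem_strictMonoTuples.1 hg
    exact mem_sigma.2 ⟨mem_range.2 (hlt _), mem_strictMonoTuples.2
      ⟨fun j => hmono j.castSucc_lt_last, hmono.comp Fin.strictMono_castSucc⟩⟩
  · obtain ⟨hm, hx⟩ := mem_sigma.1 hx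
    obtain ⟨hlt, hmono⟩ := mem_strictMonoTuples.1 hx
    refine mem_strictMonoTuples.2 ⟨fun j => ?_, strictMono_snoc hmono hlt⟩
    induction j using Fin.lastCases with
    | last => simpa using hm
    | cast j => simpa using (hlt j).trans (mem_range.1 hm)
  · simp

theorem revMonomialQSym_reverse_ofFn {ℓ : ℕ} (α : Fin ℓ → ℕ) (m : ℕ) :
    revMonomialQSym R (List.ofFn α).reverse m =
      ∑ g ∈ strictMonoTuples ℓ m, ∏ j, X (g j) ^ α j := by
  induction ℓ generalizing m with
  | zero =>
    have huniv : strictMonoTuples 0 m = {Fin.elim0} :=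
      eq_singleton_iff_unique_mem.2 ⟨mem_strictMonoTuples.2 ⟨fun j => j.elim0,
        Subsingleton.strictMono _⟩, fun _ _ => Subsingleton.elim _ _⟩
    simp [huniv, revMonomialQSym_nil]
  | succ ℓ ih =>
    rw [List.ofFn_succ', List.concat_eq_append, List.reverse_concat, revMonomialQSym_cons,
      sum_strictMonoTuples_succ]
    refine sum_congr rfl fun i _ => ?_
    simp only [ih, sum_mul, Fin.prod_univ_castSucc, Fin.snoc_castSucc, Fin.snoc_last]

theorem rename_val_Mq {ℓ : ℕ} (α : Fin ℓ → ℕ) (m : ℕ) :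
    rename Fin.val (Mq m ℓ α) = revMonomialQSym ℚ (List.ofFn α).reverse m := by
  simp only [revMonomialQSym_reverse_ofFn, Mq, map_sum, map_prod, map_pow, rename_X]
  refine sum_bij (fun f _ j => (f j : ℕ)) (fun f hf => ?_) (fun f _ g _ h => ?_) (fun g hg => ?_)
    (fun _ _ => rfl)
  · exact mem_strictMonoTuples.2 ⟨fun j => (f j).isLt, (mem_filter.1 hf).2⟩
  · exact funext fun j => Fin.ext (congrFun h j)
  · obtain ⟨hlt, hmono⟩ := mem_strictMonoTuples.1 hg
    exact ⟨fun j => ⟨g j, hlt j⟩, mem_filter.2 ⟨mem_univ _, hmono⟩, rfl⟩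

theorem eval_one_Mq (m ℓ : ℕ) (α : Fin ℓ → ℕ) :
    eval (fun _ => (1 : ℚ)) (Mq m ℓ α) = m.choose ℓ := by
  have h := eval_one_revMonomialQSym (R := ℚ) (List.ofFn α).reverse m
  rw [← rename_val_Mq, eval_rename, List.length_reverse, List.length_ofFn] at h
  exact h

end MonomialQSym

section DividedSymmetrization

open Finset Equiv

variable {R K : Type*} [CommRing R] [Field K] [Algebra R K]

/-- The sequence `z₀, …, z_{n-1}, 0, 0, …`; setting the variables past the `n`-th to zero lets
polynomials in different numbers of variables share the index type `ℕ`. -/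
noncomputable def zeroExtend {n : ℕ} (z : Fin n → K) : ℕ → K := Function.extend Fin.val z 0

theorem zeroExtend_comp_val {n : ℕ} (z : Fin n → K) : zeroExtend z ∘ Fin.val = z :=
  Function.extend_comp Fin.val_injective z 0

theorem zeroExtend_of_lt {n k : ℕ} (z : Fin n → K) (h : k < n) : zeroExtend z k = z ⟨k, h⟩ :=
  congrFun (zeroExtend_comp_val z) ⟨k, h⟩

theorem zeroExtend_of_le {n k : ℕ} (z : Fin n → K) (h : n ≤ k) : zeroExtend z k = 0 :=
  Function.extend_apply' z (0 : ℕ → K) k (by rintro ⟨i, rfl⟩; exact i.isLt.not_ge h)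

theorem zeroExtend_comp_castAdd {i k j : ℕ} (z : Fin (i + k) → K) (h : j < i) :
    zeroExtend (z ∘ Fin.castAdd k) j = zeroExtend z j := by
  rw [zeroExtend_of_lt _ h, zeroExtend_of_lt _ (h.trans_le (i.le_add_right k))]
  rfl

theorem zeroExtend_comp_natAdd {i k : ℕ} (z : Fin (i + k) → K) :
    zeroExtend (z ∘ Fin.natAdd i) = zeroExtend z ∘ (i + ·) := by
  funext j
  rcases lt_or_ge j k with h | h
  · rw [Function.comp_apply, zeroExtend_of_lt _ h, zeroExtend_of_lt _ (by omega)]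
    rfl
  · rw [Function.comp_apply, zeroExtend_of_le _ h, zeroExtend_of_le _ (by omega)]

/-- The denominator `∏ (u_k - u_{k+1})`, over `0 ≤ k < n - 1`, of divided symmetrization. -/
def consecutiveDiffProd (n : ℕ) (u : ℕ → K) : K := ∏ k ∈ range (n - 1), (u k - u (k + 1))

theorem consecutiveDiffProd_congr {n : ℕ} {u v : ℕ → K} (h : ∀ k < n, u k = v k) :
    consecutiveDiffProd n u = consecutiveDiffProd n v := by
  refine prod_congr rfl fun k hk => ?_
  have := mem_range.1 hk
  rw [h k (by omega), h (k + 1) (by omega)]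

theorem consecutiveDiffProd_add (i k : ℕ) (u : ℕ → K) :
    consecutiveDiffProd (i + 1 + (k + 1)) u =
      (u i - u (i + 1)) * (consecutiveDiffProd (i + 1) u *
        consecutiveDiffProd (k + 1) (u ∘ (i + 1 + ·))) := by
  simp only [consecutiveDiffProd, ← add_assoc, Nat.add_sub_cancel, prod_range_add, prod_range_succ,
    Function.comp_apply]
  ring

theorem consecutiveDiffProd_rotate {N : ℕ} (z : Fin (N + 1) → K) (k : Fin (N + 1)) :
    consecutiveDiffProd (N + 1) (zeroExtend (z ∘ Equiv.addRight k)) * (z (Fin.last N + k) - z k) =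
      ∏ i, (z i - z (i + 1)) := by
  rw [← Equiv.prod_comp (Equiv.addRight k), Fin.prod_univ_castSucc, consecutiveDiffProd,
    Nat.add_sub_cancel, prod_range]
  congr 1
  · refine prod_congr rfl fun i _ => ?_
    rw [zeroExtend_of_lt _ (by omega), zeroExtend_of_lt _ (by omega), Equiv.coe_addRight,
      add_right_comm, Fin.coeSucc_eq_succ]
    rfl
  · rw [Equiv.coe_addRight, add_right_comm, Fin.last_add_one, zero_add]

theorem sum_inv_consecutiveDiffProd_rotate {N : ℕ} (hN : N ≠ 0) {z : Fin (N + 1) → K}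
    (hz : Function.Injective z) :
    ∑ k : Fin (N + 1), (consecutiveDiffProd (N + 1) (zeroExtend (z ∘ Equiv.addRight k)))⁻¹ = 0 := by
  have hne (k : Fin (N + 1)) : z (Fin.last N + k) - z k ≠ 0 := by
    rw [sub_ne_zero, hz.ne_iff, ne_eq, add_eq_right, Fin.ext_iff]
    simpa using hN
  have hinv (k : Fin (N + 1)) :
      (consecutiveDiffProd (N + 1) (zeroExtend (z ∘ Equiv.addRight k)))⁻¹ =
        (z (Fin.last N + k) - z k) / ∏ i, (z i - z (i + 1)) := by
    rw [← consecutiveDiffProd_rotate z k, div_mul_cancel_right₀ (hne k)]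
  have hsum : ∑ k, z (Fin.last N + k) = ∑ k, z k := Equiv.sum_comp (Equiv.addLeft (Fin.last N)) z
  simp only [hinv, ← sum_div, sum_sub_distrib, hsum, sub_self, zero_div]

/-- The summand of divided symmetrization at the identity permutation, evaluated at `z`. -/
noncomputable def divSymmTerm (n : ℕ) (p : MvPolynomial ℕ R) (z : Fin n → K) : K :=
  aeval (zeroExtend z) p / consecutiveDiffProd n (zeroExtend z)

theorem divSymmTerm_mul {i k : ℕ} {p : MvPolynomial ℕ R} (hp : p ∈ supported R (Set.Iio (i + 1)))
    (q : MvPolynomial ℕ R) {z : Fin (i + 1 + (k + 1)) → K} (hz : Function.Injective z) :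
    divSymmTerm (i + 1 + (k + 1)) ((X i - X (i + 1)) * (p * rename (i + 1 + ·) q)) z =
      divSymmTerm (i + 1) p (z ∘ Fin.castAdd (k + 1)) *
        divSymmTerm (k + 1) q (z ∘ Fin.natAdd (i + 1)) := by
  have hne : zeroExtend z i - zeroExtend z (i + 1) ≠ 0 := by
    rw [zeroExtend_of_lt z (by omega), zeroExtend_of_lt z (by omega), sub_ne_zero]
    exact hz.ne (by simp)
  have hcast : Set.EqOn (zeroExtend (z ∘ Fin.castAdd (k + 1))) (zeroExtend z) (Set.Iio (i + 1)) :=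
    fun j hj => zeroExtend_comp_castAdd z hj
  simp only [divSymmTerm, map_mul, map_sub, aeval_X, aeval_rename]
  rw [consecutiveDiffProd_add, mul_div_mul_left _ _ hne, mul_div_mul_comm, zeroExtend_comp_natAdd,
    aeval_congr_of_mem_supported hp hcast, consecutiveDiffProd_congr hcast]

/-- Divided symmetrization in `n` variables, evaluated at the point `y`. -/
noncomputable def divSymm (n : ℕ) (y : Fin n → K) : MvPolynomial ℕ R →ₗ[R] K where
  toFun p := ∑ w : Perm (Fin n), divSymmTerm n p (y ∘ w)
  map_add' p q := by simp only [divSymmTerm, map_add, add_div, sum_add_distrib]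
  map_smul' r p := by simp only [divSymmTerm, map_smul, smul_div_assoc, smul_sum, RingHom.id_apply]

theorem divSymm_apply (n : ℕ) (y : Fin n → K) (p : MvPolynomial ℕ R) :
    divSymm n y p = ∑ w : Perm (Fin n), divSymmTerm n p (y ∘ w) :=
  rfl

theorem DS_eq_divSymm (n : ℕ) (p : MvPolynomial (Fin n) ℚ) :
    DS n p = divSymm n (fun i => algebraMap (MvPolynomial (Fin n) ℚ)
      (FractionRing (MvPolynomial (Fin n) ℚ)) (X i)) (rename Fin.val p) := by
  refine sum_congr rfl fun w _ => ?_
  congr 1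
  · rw [aeval_rename, zeroExtend_comp_val, ← IsScalarTower.toAlgHom_apply ℚ, rename_eq_aeval,
      ← AlgHom.comp_apply, comp_aeval]
    rfl
  · rw [denomDS, consecutiveDiffProd, prod_range, map_prod, map_prod]
    refine prod_congr rfl fun i _ => ?_
    rw [zeroExtend_of_lt _ (by omega), zeroExtend_of_lt _ (by omega), map_sub, map_sub, rename_X,
      rename_X]
    rfl

theorem divSymm_rename_mul_of_isSymmetric {n : ℕ} {s : MvPolynomial (Fin n) R}
    (hs : s.IsSymmetric) (y : Fin n → K) (p : MvPolynomial ℕ R) :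
    divSymm n y (rename Fin.val s * p) = aeval y s * divSymm n y p := by
  have haeval (w : Perm (Fin n)) : aeval (zeroExtend (y ∘ w)) (rename Fin.val s) = aeval y s := by
    conv_rhs => rw [← hs w]
    rw [aeval_rename, aeval_rename, zeroExtend_comp_val]
  simp only [divSymm_apply, divSymmTerm, map_mul, haeval, mul_sum, mul_div_assoc]

/-- The divided symmetrization of `p` in `n` variables is the constant `a`, as it is for every `p`
of degree at most `n - 1`. The values of `y` must be distinct since division by zero yields `0`. -/
def HasDivSymm (n : ℕ) (p : MvPolynomial ℕ R) (a : K) : Prop :=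
  ∀ y : Fin n → K, Function.Injective y → divSymm n y p = a

theorem hasDivSymm_one_one : HasDivSymm 1 (1 : MvPolynomial ℕ R) (1 : K) := fun y _ => by
  simp [divSymm_apply, divSymmTerm, consecutiveDiffProd]

variable [CharZero K]

theorem hasDivSymm_mul_of_forall {i k : ℕ} {p q : MvPolynomial ℕ R} {c : K}
    (hp : p ∈ supported R (Set.Iio (i + 1)))
    (h : ∀ (y : Fin (i + 1) → K) (z : Fin (k + 1) → K), Function.Injective y →
      Function.Injective z → divSymm (i + 1) y p * divSymm (k + 1) z q = c) :
    HasDivSymm (i + 1 + (k + 1)) ((X i - X (i + 1)) * (p * rename (i + 1 + ·) q))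
      ((i + 1 + (k + 1)).choose (i + 1) * c) := by
  intro y hy
  have hfact : ((i + 1).factorial * (k + 1).factorial : K) ≠ 0 := by
    exact_mod_cast mul_ne_zero (Nat.factorial_ne_zero _) (Nat.factorial_ne_zero _)
  have hchoose : ((i + 1 + (k + 1)).choose (i + 1) : K) * (i + 1).factorial * (k + 1).factorial =
      (i + 1 + (k + 1)).factorial := by
    rw [Nat.choose_symm_add]
    exact_mod_cast Nat.add_choose_mul_factorial_mul_factorial (i + 1) (k + 1)
  apply mul_left_cancel₀ hfact
  calc (((i + 1).factorial * (k + 1).factorial : K)) * divSymm _ y _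
    _ = ∑ w : Perm (Fin (i + 1 + (k + 1))), divSymm (i + 1) (y ∘ w ∘ Fin.castAdd (k + 1)) p *
          divSymm (k + 1) (y ∘ w ∘ Fin.natAdd (i + 1)) q := by
        simp only [divSymm_apply, divSymmTerm_mul hp q (hy.comp (Equiv.injective _))]
        exact factorial_mul_sum_perm_add _ _ y
    _ = ∑ _w : Perm (Fin (i + 1 + (k + 1))), c := sum_congr rfl fun w _ =>
        h _ _ (hy.comp (w.injective.comp (Fin.castAdd_injective _ _)))
          (hy.comp (w.injective.comp (Fin.natAdd_injective _ _)))
    _ = _ := by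
        rw [sum_const, card_univ, Fintype.card_perm, Fintype.card_fin, nsmul_eq_mul, ← hchoose]
        ring

namespace HasDivSymm

variable {i k : ℕ} {p q : MvPolynomial ℕ R}

theorem mul {a b : K} (hp : p ∈ supported R (Set.Iio (i + 1))) (ha : HasDivSymm (i + 1) p a)
    (hb : HasDivSymm (k + 1) q b) :
    HasDivSymm (i + 1 + (k + 1)) ((X i - X (i + 1)) * (p * rename (i + 1 + ·) q))
      ((i + 1 + (k + 1)).choose (i + 1) * (a * b)) :=
  hasDivSymm_mul_of_forall hp fun y z hy hz => by rw [ha y hy, hb z hz]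

theorem mul_of_zero_left (hp : p ∈ supported R (Set.Iio (i + 1)))
    (h : HasDivSymm (i + 1) p (0 : K)) :
    HasDivSymm (i + 1 + (k + 1)) ((X i - X (i + 1)) * (p * rename (i + 1 + ·) q)) (0 : K) := by
  simpa using hasDivSymm_mul_of_forall (k := k) (q := q) (c := (0 : K)) hp
    fun y z hy _ => by rw [h y hy, zero_mul]

theorem mul_of_zero_right (hp : p ∈ supported R (Set.Iio (i + 1)))
    (h : HasDivSymm (k + 1) q (0 : K)) :
    HasDivSymm (i + 1 + (k + 1)) ((X i - X (i + 1)) * (p * rename (i + 1 + ·) q)) (0 : K) := by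
  simpa using hasDivSymm_mul_of_forall (k := k) (q := q) (c := (0 : K)) hp
    fun y z _ hz => by rw [h z hz, mul_zero]

end HasDivSymm

theorem hasDivSymm_one_zero {n : ℕ} (hn : 1 < n) :
    HasDivSymm n (1 : MvPolynomial ℕ R) (0 : K) := by
  obtain ⟨N, rfl⟩ : ∃ N, n = N + 1 := Nat.exists_eq_add_one.2 (by omega)
  intro y hy
  have hrotate (k : Fin (N + 1)) : divSymm (N + 1) y (1 : MvPolynomial ℕ R) =
      ∑ w : Perm (Fin (N + 1)),
        (consecutiveDiffProd (N + 1) (zeroExtend ((y ∘ w) ∘ Equiv.addRight k)))⁻¹ := by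
    rw [divSymm_apply, ← Equiv.sum_comp (Equiv.mulRight (Equiv.addRight k))]
    simp only [divSymmTerm, map_one, one_div]
    rfl
  have hsum : ∑ _k : Fin (N + 1), divSymm (N + 1) y (1 : MvPolynomial ℕ R) = 0 := by
    rw [sum_congr rfl fun k _ => hrotate k, sum_comm]
    exact sum_eq_zero fun w _ =>
      sum_inv_consecutiveDiffProd_rotate (by omega) (hy.comp w.injective)
  rw [sum_const, card_univ, Fintype.card_fin, smul_eq_zero] at hsum
  exact hsum.resolve_left N.succ_ne_zero

theorem hasDivSymm_psum {n : ℕ} (hn : 1 < n) (q : ℕ) :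
    HasDivSymm n (∑ j ∈ range n, X j ^ q : MvPolynomial ℕ R) (0 : K) := by
  intro y hy
  have hpsum : (∑ j ∈ range n, X j ^ q : MvPolynomial ℕ R) =
      rename Fin.val (psum (Fin n) R q) * 1 := by
    simp only [psum, map_sum, map_pow, rename_X, mul_one, sum_range]
  rw [hpsum, divSymm_rename_mul_of_isSymmetric (psum_isSymmetric _ _ q),
    hasDivSymm_one_zero hn y hy, mul_zero]

theorem hasDivSymm_X_pow_of_lt {n q j : ℕ} (hq : q + 1 < n) (hj : j < n) :
    HasDivSymm n (X j ^ q : MvPolynomial ℕ R) (0 : K) := by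
  induction n using Nat.strong_induction_on generalizing q j with
  | _ n ih =>
  intro y hy
  refine eq_zero_of_eq_succ_of_sum_range_eq_zero
    (v := fun j => divSymm n y (X j ^ q : MvPolynomial ℕ R)) (fun i hi => sub_eq_zero.1 ?_) ?_ hj
  · rw [← map_sub, X_pow_sub_X_succ_pow, map_sum]
    refine sum_eq_zero fun t ht => ?_
    have ht := mem_range.1 ht
    obtain ⟨k, rfl⟩ := Nat.exists_eq_add_of_lt hi
    by_cases hti : t < i
    · exact (ih (i + 1) (by omega) (by omega) (by omega)).mul_of_zero_left
        (X_pow_mem_supported i.lt_succ_self t) y hy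
    · exact (ih (k + 1) (by omega) (by omega) (by omega)).mul_of_zero_right
        (X_pow_mem_supported i.lt_succ_self t) y hy
  · rw [← map_sum, hasDivSymm_psum (by omega) q y hy]

theorem hasDivSymm_X_pow {n j : ℕ} (hj : j ≤ n) :
    HasDivSymm (n + 1) (X j ^ n : MvPolynomial ℕ R) ((-1) ^ j * n.choose j : K) := by
  induction n using Nat.strong_induction_on generalizing j with
  | _ n ih =>
  rcases Nat.eq_zero_or_pos n with rfl | hn
  · obtain rfl := Nat.le_zero.1 hj
    simpa using hasDivSymm_one_one
  intro y hy
  refine sub_eq_zero.1 (eq_zero_of_eq_succ_of_sum_range_eq_zero (n := n + 1) (v := fun j =>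
    divSymm (n + 1) y (X j ^ n : MvPolynomial ℕ R) - (-1) ^ j * n.choose j)
    (fun i hi => ?_) ?_ (Nat.lt_succ_of_le hj))
  · obtain ⟨k, rfl⟩ := Nat.exists_eq_add_of_le (Nat.le_of_lt_succ hi)
    have hdiff : divSymm (i + 1 + (k + 1)) y (X i ^ (i + 1 + k) - X (i + 1) ^ (i + 1 + k) :
        MvPolynomial ℕ R) = (i + 1 + (k + 1)).choose (i + 1) * (-1) ^ i := by
      rw [X_pow_sub_X_succ_pow, map_sum, sum_eq_single_of_mem i (mem_range.2 (by omega))]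
      · rw [show i + 1 + k - 1 - i = k by omega]
        simpa using (ih i (by omega) le_rfl).mul (X_pow_mem_supported i.lt_succ_self i)
          (ih k (by omega) k.zero_le) y hy
      · intro t ht hti
        have ht := mem_range.1 ht
        rcases lt_or_gt_of_ne hti with h | h
        · exact (hasDivSymm_X_pow_of_lt (by omega) i.lt_succ_self).mul_of_zero_left
            (X_pow_mem_supported i.lt_succ_self t) y hy
        · exact (hasDivSymm_X_pow_of_lt (by omega) k.succ_pos).mul_of_zero_right
            (X_pow_mem_supported i.lt_succ_self t) y hy
    have hpascal : ((i + 1 + (k + 1)).choose (i + 1) : K) =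
        (i + 1 + k).choose i + (i + 1 + k).choose (i + 1) := by
      exact_mod_cast Nat.choose_succ_succ _ _
    rw [map_sub, hpascal] at hdiff
    linear_combination hdiff
  · have h := Int.alternating_sum_range_choose_of_ne hn.ne'
    rw [sum_sub_distrib, ← map_sum, hasDivSymm_psum (by omega) n y hy, zero_sub, neg_eq_zero]
    exact_mod_cast congrArg (Int.cast : ℤ → K) h

variable (R K) in
/-- The monomial quasisymmetric functions of positive degree less than `k`, restricted to all `k`
variables, have divided symmetrization zero. Named because `qsymDivSymmVanishes` is proved by
strong induction on `k`, using the lemmas that assume it for smaller numbers of variables. -/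
def QSymDivSymmVanishes (k : ℕ) : Prop :=
  ∀ α : List ℕ, α ≠ [] → (∀ a ∈ α, 0 < a) → α.sum < k →
    HasDivSymm k (revMonomialQSym R α k) (0 : K)

theorem divSymm_revMonomialQSym_mul_X_pow_succ {n a q m : ℕ} {β : List ℕ}
    (hvanish : ∀ k < n, QSymDivSymmVanishes R K k) (hpos : ∀ b ∈ a :: β, 0 < b)
    (hdeg : (a :: β).sum + q + 1 < n) (hm : m < n) {y : Fin n → K} (hy : Function.Injective y) :
    divSymm n y (revMonomialQSym R (a :: β) m * X m ^ (q + 1)) =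
      divSymm n y (revMonomialQSym R ((a + 1) :: β) m * X m ^ q) := by
  have hterm : ∀ k ∈ range m,
      divSymm n y ((X k - X (k + 1)) * (revMonomialQSym R (a :: β) (k + 1) * X m ^ q)) = 0 := by
    intro k hk
    obtain ⟨d, rfl⟩ := Nat.exists_eq_add_of_le (mem_range.1 hk)
    obtain ⟨e, rfl⟩ : ∃ e, n = k + 1 + (e + 1) := ⟨n - (k + 2), by omega⟩
    have hX : (X (k + 1 + d) ^ q : MvPolynomial ℕ R) = rename (k + 1 + ·) (X d ^ q) := by
      rw [map_pow, rename_X]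
    have hsupp := revMonomialQSym_mem_supported (R := R) (a :: β) (k + 1)
    rw [hX]
    rcases lt_or_ge (a :: β).sum (k + 1) with h | h
    · exact (hvanish _ (by omega) _ (List.cons_ne_nil a β) hpos h).mul_of_zero_left hsupp y hy
    · exact (hasDivSymm_X_pow_of_lt (by omega) (by omega)).mul_of_zero_right hsupp y hy
  rw [← sub_eq_zero, ← neg_eq_zero, neg_sub, ← map_sub, pow_succ', ← mul_assoc, ← sub_mul,
    revMonomialQSym_succ_cons_sub, sum_mul, map_sum]
  simpa only [mul_assoc] using sum_eq_zero hterm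

theorem divSymm_revMonomialQSym_mul_X_pow {n a q m : ℕ} {β : List ℕ}
    (hvanish : ∀ k < n, QSymDivSymmVanishes R K k) (hpos : ∀ b ∈ a :: β, 0 < b)
    (hdeg : (a :: β).sum + q < n) (hm : m < n) {y : Fin n → K} (hy : Function.Injective y) :
    divSymm n y (revMonomialQSym R (a :: β) m * X m ^ q) =
      divSymm n y (revMonomialQSym R ((a + q) :: β) m) := by
  induction q generalizing a with
  | zero => rw [pow_zero, mul_one, add_zero]
  | succ q ih =>
    have hpos' : ∀ b ∈ (a + 1) :: β, 0 < b :=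
      List.forall_mem_cons.2 ⟨a.succ_pos, (List.forall_mem_cons.1 hpos).2⟩
    rw [List.sum_cons] at hdeg
    rw [divSymm_revMonomialQSym_mul_X_pow_succ hvanish hpos (by rw [List.sum_cons]; omega) hm hy,
      ih hpos' (by rw [List.sum_cons]; omega), add_right_comm, add_assoc]

theorem divSymm_revMonomialQSym_cons {n b m : ℕ} {β : List ℕ}
    (hvanish : ∀ k < n, QSymDivSymmVanishes R K k) (hpos : ∀ c ∈ b :: β, 0 < c)
    (hdeg : (b :: β).sum < n) (hm : m ≤ n) {y : Fin n → K} (hy : Function.Injective y) :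
    divSymm n y (revMonomialQSym R (b :: β) m) = ∑ j ∈ range m,
      ((m - 1 - j).choose β.length : K) * divSymm n y (X j ^ (b :: β).sum : MvPolynomial ℕ R) := by
  induction β generalizing b m with
  | nil =>
    simp [revMonomialQSym_cons, revMonomialQSym_nil]
  | cons a γ ih =>
    obtain ⟨hb, hpos'⟩ := List.forall_mem_cons.1 hpos
    have hsum : ((a + b) :: γ).sum = (b :: a :: γ).sum := by
      simp only [List.sum_cons]
      ring
    have hmerged : ∀ c ∈ (a + b) :: γ, 0 < c :=
      List.forall_mem_cons.2 ⟨Nat.add_pos_right a hb, (List.forall_mem_cons.1 hpos').2⟩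
    rw [revMonomialQSym_cons, map_sum, List.length_cons, ← sum_range_sum_range_choose_mul]
    refine sum_congr rfl fun i hi => ?_
    have hi := (mem_range.1 hi).trans_le hm
    have hdeg' := hdeg
    rw [List.sum_cons, add_comm] at hdeg'
    rw [divSymm_revMonomialQSym_mul_X_pow hvanish hpos' hdeg' hi hy,
      ih hmerged (hsum ▸ hdeg) hi.le, hsum]

theorem qsymDivSymmVanishes (n : ℕ) : QSymDivSymmVanishes R K n := by
  induction n using Nat.strong_induction_on with
  | _ n ih =>
  intro α hα hpos hdeg y hy
  obtain ⟨b, β, rfl⟩ := List.exists_cons_of_ne_nil hα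
  rw [divSymm_revMonomialQSym_cons ih hpos hdeg le_rfl hy]
  rcases (Nat.succ_le_of_lt hdeg).lt_or_eq with h | rfl
  · refine sum_eq_zero fun j hj => ?_
    rw [hasDivSymm_X_pow_of_lt h (mem_range.1 hj) y hy, mul_zero]
  · have hlength : β.length < (b :: β).sum := List.length_le_sum_of_one_le _ hpos
    have hzero : ∑ j ∈ range ((b :: β).sum + 1), (-1 : K) ^ j * (b :: β).sum.choose j *
        ((b :: β).sum - j).choose β.length = 0 := by
      exact_mod_cast congrArg (Int.cast : ℤ → K) (sum_neg_one_pow_mul_choose_mul_choose hlength)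
    rw [← hzero]
    refine sum_congr rfl fun j hj => ?_
    rw [hasDivSymm_X_pow (mem_range_succ_iff.1 hj) y hy, mul_comm, Nat.succ_sub_one]

theorem hasDivSymm_revMonomialQSym {m : ℕ} {α : List ℕ} (hpos : ∀ a ∈ α, 0 < a) (hm : 0 < m)
    (hmn : m ≤ α.sum + 1) :
    HasDivSymm (α.sum + 1) (revMonomialQSym R α m)
      (∑ i ∈ range m, (-1) ^ i * (α.sum + 1).choose i * (m - i).choose α.length : K) := by
  intro y hy
  cases α with
  | nil =>
    obtain rfl : m = 1 := le_antisymm hmn hm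
    simpa [revMonomialQSym_nil] using hasDivSymm_one_one y hy
  | cons b β =>
    have hsum := congrArg (Int.cast : ℤ → K)
      (sum_neg_one_pow_mul_choose_succ_mul_choose_succ (b :: β).sum β.length m)
    push_cast at hsum
    rw [divSymm_revMonomialQSym_cons (fun k _ => qsymDivSymmVanishes k) hpos (Nat.lt_succ_self _)
      hmn hy, List.length_cons, hsum]
    refine sum_congr rfl fun j hj => ?_
    rw [hasDivSymm_X_pow (by have := mem_range.1 hj; omega) y hy]

theorem hasDivSymm_rename_val_Mq [Algebra ℚ K] {n m : ℕ}
    (hm : 0 < m) (hmn : m ≤ n) (α : Composition (n - 1)) :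
    HasDivSymm n (rename Fin.val (Mq m α.length α.blocksFun)) (algebraMap ℚ K
      (∑ i ∈ range m, (-1) ^ i * n.choose i *
        eval (fun _ => 1) (Mq (m - i) α.length α.blocksFun))) := by
  obtain ⟨N, rfl⟩ : ∃ N, n = N + 1 := Nat.exists_eq_add_one.2 (hm.trans_le hmn)
  have hsum : α.blocks.reverse.sum = N := by
    rw [List.sum_reverse, α.blocks_sum, Nat.add_sub_cancel]
  have h := hasDivSymm_revMonomialQSym (R := ℚ) (K := K) (m := m) (α := α.blocks.reverse)
    (fun a ha => α.blocks_pos (List.mem_reverse.1 ha)) hm (by omega)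
  rw [hsum, List.length_reverse, α.blocks_length, ← α.ofFn_blocksFun, ← rename_val_Mq] at h
  simpa [eval_one_Mq] using h

theorem hasDivSymm_rename_val_Pq [Algebra ℚ K] {n m : ℕ}
    (hm : 0 < m) (hmn : m ≤ n) (c : Composition (n - 1) → ℚ) :
    HasDivSymm n (rename Fin.val (Pq n c m)) (algebraMap ℚ K
      (∑ i ∈ range m, (-1) ^ i * n.choose i * eval (fun _ => 1) (Pq n c (m - i)))) := by
  intro y hy
  simp only [Pq, map_sum, map_smul, hasDivSymm_rename_val_Mq hm hmn _ y hy, smul_eval]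
  simp only [Algebra.smul_def, ← map_mul, ← map_sum, mul_sum]
  rw [sum_comm]
  simp only [mul_left_comm]

end DividedSymmetrization

/-- For a quasisymmetric function `f` of degree `n-1` and `1 ≤ m ≤ n`,
`⟨f(x_1,...,x_m)⟩_n = Σ_{i=0}^{m-1} (-1)^i C(n,i) f(1^{m-i})`. -/
theorem stmt17 (n : ℕ) (hn : 1 ≤ n) (c : Composition (n - 1) → ℚ)
    (m : ℕ) (h1 : 1 ≤ m) (hm : m ≤ n) :
    DS n (rename (Fin.castLE hm) (Pq n c m)) =
      algebraMap ℚ (FractionRing (MvPolynomial (Fin n) ℚ))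
        (∑ i ∈ Finset.range m,
          (-1 : ℚ) ^ i * (n.choose i : ℚ) * eval (fun _ => (1 : ℚ)) (Pq n c (m - i))) := by
  have : CharZero (FractionRing (MvPolynomial (Fin n) ℚ)) := algebraRat.charZero _
  rw [DS_eq_divSymm, rename_rename]
  exact hasDivSymm_rename_val_Pq h1 hm c _ ((IsFractionRing.injective _ _).comp X_injective)
end
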